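/- Let ε > 0 and let g, h : (0,∞) → [0,ω₁) be non-increasing left-continuous functions that vanish beyond some A < ∞ (not necessarily with finite range), with g(t) ≤ h(t) for all t. If λ({t : g(t)+1 ≤ h(t)}) ≥ ε, then C(g,ε) + 1 ≤ C(h,ε). -/

import Mathlib

open MeasureTheory Set Ordinal Filter
open scoped Classical

/-- `g` is non-increasing on `(0,∞)`. -/
def NonIncr (g : ℝ → Ordinal) : Prop := ∀ s t : ℝ, 0 < s → s ≤ t → g t ≤ g s

/-- `g` is left continuous on `(0,∞)`; for non-increasing ordinal-valued
functions this is equivalent to being locally constant from the left. -/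
def LeftCont (g : ℝ → Ordinal) : Prop :=
  ∀ t : ℝ, 0 < t → ∃ δ > 0, ∀ s : ℝ, t - δ < s → s ≤ t → g s = g t

/-- `g` has finite range on `(0,∞)`. -/
def FiniteRange (g : ℝ → Ordinal) : Prop := (g '' Set.Ioi (0:ℝ)).Finite

/-- `g` takes values in `[0,ω₁)`, the countable ordinals. -/
def CountableValued (g : ℝ → Ordinal) : Prop := ∀ t : ℝ, 0 < t → g t < ω₁

/-- `g` vanishes beyond `A`. -/
def VanishesBeyond (g : ℝ → Ordinal) (A : ℝ) : Prop := ∀ t : ℝ, A < t → g t = 0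

/-- The level set `{t ∈ (0,∞) : g t = α}`. -/
def lev (g : ℝ → Ordinal) (α : Ordinal) : Set ℝ := {t | 0 < t ∧ g t = α}

/-- `G` is the non-increasing left-continuous rearrangement of `u`: it is
non-increasing, left continuous, and each nonzero level set has the same
Lebesgue measure as that of `u`. -/
def IsRearrangement (G u : ℝ → Ordinal) : Prop :=
  NonIncr G ∧ LeftCont G ∧ ∀ α : Ordinal, 0 < α → volume (lev G α) = volume (lev u α)

/-- The function `g − γ·1_I` (pointwise ordinal subtraction on `I`). -/
noncomputable def subInd (g : ℝ → Ordinal) (γ : Ordinal) (I : Set ℝ) : ℝ → Ordinal :=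
  fun t => if t ∈ I then g t - γ else g t

/-- `h` is an ε-compression of `g` (by some `γ`): for some `0 < γ ≤ g(ε)` and `f` the
non-increasing left-continuous rearrangement of `g − γ·1_{(0,ε]}`, one has `h = γ·1_{(0,ε]} + f`
on `(0,∞)`. -/
def IsCompression (ε : ℝ) (h g : ℝ → Ordinal) : Prop :=
  ∃ (γ : Ordinal) (f : ℝ → Ordinal), 0 < γ ∧ γ ≤ g ε ∧
    IsRearrangement f (subInd g γ (Set.Ioc 0 ε)) ∧
    (∀ t : ℝ, 0 < t → t ≤ ε → h t = γ + f t) ∧ (∀ t : ℝ, ε < t → h t = f t)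

/-- The set of values `h_n(ε)` over all finite chains `h₀ ≤ g`, `h_{i+1}` an ε-compression of
`h_i`, consisting of non-increasing left-continuous functions with finite range and bounded
support. -/
def AreaVals (ε : ℝ) (g : ℝ → Ordinal) : Set Ordinal :=
  {α | ∃ (n : ℕ) (f : ℕ → ℝ → Ordinal),
    (∀ i ≤ n, NonIncr (f i) ∧ LeftCont (f i) ∧ FiniteRange (f i) ∧
      ∃ A : ℝ, VanishesBeyond (f i) A) ∧
    (∀ t : ℝ, 0 < t → f 0 t ≤ g t) ∧
    (∀ i < n, IsCompression ε (f (i + 1)) (f i)) ∧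
    α = f n ε}

/-- The ε-area `C(g,ε)` under `g`. -/
noncomputable def Carea (ε : ℝ) (g : ℝ → Ordinal) : Ordinal := sSup (AreaVals ε g)

/-!
A non-increasing left-continuous function `f` is determined by its distribution function
`D x = λ({f ≥ x})`. In these terms subtracting `δ` on `(0,ε]` and rearranging is the operation
`reduceBy ε δ`, it is possible if and only if `ε ≤ D δ`, and the ε-area is the supremum of the
totals `δ₁ + ⋯ + δₙ` of successive reductions.

This supremum is attained. A sequence of reductions with total `γ` can be replaced, for every
`γ' ≤ γ`, by the one along the Cantor normal form of `γ'`, which depends on `γ'` only. If all totals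
below `ω ^ a * q + ω ^ a` are possible, then an average of the resulting bounds shows that after
`ω ^ a * q` there is still room `ε ≤ D (ω ^ a)` for `ω ^ a` in one step.

If `g ≤ h` vanish beyond `A` and have distribution functions `D` and `E`, then `g < h` holds on a
set of measure at least `ε` only if `∑ max 0 (D α - E (α + 1)) ≤ A - ε`. This inequality is
preserved when `D` and `E` are reduced by the same amounts, and its term at `α = 0` is
`A - E 1`. So after the reductions that attain `C(g,ε)` one has `ε ≤ E 1`, and `h` admits one more
reduction, by `1`.
-/

section Reduction

variable {ε A : ℝ} {D D₀ E E₀ : Ordinal → ℝ} {γ δ : Ordinal}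

/-- If `f` is non-increasing with `λ({f ≥ x}) = D x` and `ε ≤ D δ`, then `reduceBy ε δ D` is the
distribution function of `f - δ·1_{(0,ε]}`: the part of `f` beyond `ε` contributes
`max (D x - ε) 0` and the part up to `ε` contributes `min ε (D (δ + x))`. -/
noncomputable def reduceBy (ε : ℝ) (δ : Ordinal) (D : Ordinal → ℝ) (x : Ordinal) : ℝ :=
  max (D x - ε) 0 + min ε (D (δ + x))

theorem max_sub_zero_add_min (a b : ℝ) : max (b - a) 0 + min a b = b := by
  grind

theorem reduceBy_eq (ε : ℝ) (δ : Ordinal) (D : Ordinal → ℝ) (x : Ordinal) :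
    reduceBy ε δ D x = D x - min ε (D x) + min ε (D (δ + x)) := by
  rw [reduceBy, ← eq_sub_of_add_eq (max_sub_zero_add_min ε (D x))]

theorem reduceBy_zero (ε : ℝ) (D : Ordinal → ℝ) : reduceBy ε 0 D = D := by
  funext x
  rw [reduceBy, zero_add, max_sub_zero_add_min]

theorem reduceBy_mono (ε : ℝ) (δ : Ordinal) : Monotone (reduceBy ε δ) := fun _ _ h x => by
  unfold reduceBy
  gcongr
  exacts [h x, h _]

theorem reduceBy_le_reduceBy (hD : Antitone D) (ε : ℝ) {δ' : Ordinal} (h : δ ≤ δ') :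
    reduceBy ε δ' D ≤ reduceBy ε δ D := fun x => by
  unfold reduceBy
  gcongr
  exact hD (by gcongr)

theorem reduceBy_le (hD : Antitone D) (ε : ℝ) (δ : Ordinal) : reduceBy ε δ D ≤ D :=
  (reduceBy_le_reduceBy hD ε zero_le).trans_eq (reduceBy_zero ε D)

theorem reduceBy_antitone (hD : Antitone D) (ε : ℝ) (δ : Ordinal) :
    Antitone (reduceBy ε δ D) := fun x y h => by
  unfold reduceBy
  gcongr
  · exact hD h
  · exact hD (by gcongr)

/-- The distribution functions `x ↦ λ({t ∈ (0,A] : f t ≥ x})` of non-increasing left-continuous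
`f : (0,A] → Ord`. Continuity is with respect to the order topology on the ordinals, that is, `D`
does not jump at limit ordinals. -/
structure IsDistribution (A : ℝ) (D : Ordinal → ℝ) : Prop where
  antitone : Antitone D
  nonneg : 0 ≤ D
  map_zero : D 0 = A
  continuous : Continuous D
  exists_lt : ∀ t > 0, ∃ x, D x < t

theorem IsDistribution.le (hD : IsDistribution A D) (x : Ordinal) : D x ≤ A :=
  (hD.antitone zero_le).trans_eq hD.map_zero

theorem IsDistribution.reduceBy (hD : IsDistribution A D) (hε : 0 ≤ ε) (hδ : ε ≤ D δ) :
    IsDistribution A (reduceBy ε δ D) where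
  antitone := reduceBy_antitone hD.antitone ε δ
  nonneg x := add_nonneg (le_max_right _ _) (le_min hε (hD.nonneg _))
  map_zero := by
    rw [_root_.reduceBy, add_zero, hD.map_zero, min_eq_left hδ,
      max_eq_left (sub_nonneg.2 (hδ.trans (hD.le δ))), sub_add_cancel]
  continuous := ((hD.continuous.sub continuous_const).max continuous_const).add
    (continuous_const.min (hD.continuous.comp (isNormal_add_right δ).continuous))
  exists_lt t ht := (hD.exists_lt t ht).imp fun x => (reduceBy_le hD.antitone ε δ x).trans_lt

/-- `Reduces ε D₀ γ D`: starting from the distribution function `D₀`, finitely many successive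
reductions by amounts with sum `γ` lead to `D`. -/
inductive Reduces (ε : ℝ) (D₀ : Ordinal → ℝ) : Ordinal → (Ordinal → ℝ) → Prop
  | nil : Reduces ε D₀ 0 D₀
  | step {γ δ : Ordinal} {D : Ordinal → ℝ} :
      Reduces ε D₀ γ D → ε ≤ D δ → Reduces ε D₀ (γ + δ) (reduceBy ε δ D)

/-- The total amounts by which `D₀` can be reduced. -/
def reductionTotals (ε : ℝ) (D₀ : Ordinal → ℝ) : Set Ordinal := {γ | ∃ D, Reduces ε D₀ γ D}

theorem Reduces.isDistribution (h : Reduces ε D₀ γ D) (hε : 0 ≤ ε) (h₀ : IsDistribution A D₀) :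
    IsDistribution A D := by
  induction h with
  | nil => exact h₀
  | step _ hδ ih => exact ih.reduceBy hε hδ

theorem Reduces.antitone (h : Reduces ε D₀ γ D) (h₀ : Antitone D₀) : Antitone D := by
  induction h with
  | nil => exact h₀
  | step _ _ ih => exact reduceBy_antitone ih ε _

theorem Reduces.le (h : Reduces ε D₀ γ D) (h₀ : Antitone D₀) : D ≤ D₀ := by
  induction h with
  | nil => exact le_rfl
  | step h _ ih => exact (reduceBy_le (h.antitone h₀) ε _).trans ih

theorem exists_forall_reductionTotals_lt_opow (hε : 0 < ε) (h₀ : IsDistribution A D₀) :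
    ∃ B : Ordinal, ∀ γ ∈ reductionTotals ε D₀, γ < ω ^ B := by
  obtain ⟨B, hB⟩ := h₀.exists_lt ε hε
  refine ⟨B, ?_⟩
  rintro γ ⟨D, h⟩
  induction h with
  | nil => exact opow_pos B omega0_pos
  | step h hδ ih =>
    refine isPrincipal_add_omega0_opow B ih (lt_of_lt_of_le ?_ (right_le_opow B one_lt_omega0))
    exact h₀.antitone.reflect_lt (hB.trans_le (hδ.trans (h.le h₀.antitone _)))

/-- Comparison at scale `ω ^ a`: along every progression `y, ω ^ a + y, ω ^ a * 2 + y, …` with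
`y ≤ ω ^ a`, the partial sums of `D` are at most those of `E`. Unlike `D ≤ E`, this survives
replacing one reduction by several smaller ones with the same total. -/
def LevelLE (a : Ordinal) (D E : Ordinal → ℝ) : Prop :=
  ∀ y ≤ ω ^ a, ∀ m : ℕ, ∑ i ∈ Finset.range m, D (ω ^ a * i + y) ≤
    ∑ i ∈ Finset.range m, E (ω ^ a * i + y)

theorem LevelLE.of_le (a : Ordinal) (h : D ≤ E) : LevelLE a D E :=
  fun _ _ _ => Finset.sum_le_sum fun _ _ => h _

theorem LevelLE.trans {a : Ordinal} {F : Ordinal → ℝ} (h : LevelLE a D E) (h' : LevelLE a E F) :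
    LevelLE a D F :=
  fun y hy m => (h y hy m).trans (h' y hy m)

theorem LevelLE.le {a y : Ordinal} (h : LevelLE a D E) (hy : y ≤ ω ^ a) : D y ≤ E y := by
  simpa using h y hy 1

theorem LevelLE.of_level_le {a c : Ordinal} (h : LevelLE c D E) (hac : a ≤ c) :
    LevelLE a D E := by
  rcases hac.eq_or_lt with rfl | hlt
  · exact h
  intro y hy m
  refine Finset.sum_le_sum fun i _ => h.le ?_
  calc ω ^ a * i + y ≤ ω ^ a * i + ω ^ a := by gcongr
    _ = ω ^ a * ((i + 1 : ℕ) : Ordinal) := by rw [Nat.cast_succ, mul_add_one]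
    _ ≤ ω ^ c := (opow_mul_lt_opow (natCast_lt_omega0 _) hlt).le

theorem add_mul_natCast_add (α y : Ordinal) (i : ℕ) :
    α + (α * i + y) = α * ((i + 1 : ℕ) : Ordinal) + y := by
  rw [← add_assoc, ← mul_one_add, Nat.add_comm, Nat.cast_add, Nat.cast_one]

/-- The terms `min ε (D (ω ^ a * i + y))` telescope. -/
theorem sum_reduceBy_opow {a y : Ordinal} (hy : ε ≤ D y) (m : ℕ) :
    ∑ i ∈ Finset.range m, reduceBy ε (ω ^ a) D (ω ^ a * i + y) =
      min (∑ i ∈ Finset.range m, D (ω ^ a * i + y))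
        (∑ i ∈ Finset.range (m + 1), D (ω ^ a * i + y) - ε) := by
  have telescope := Finset.sum_range_sub (fun i : ℕ => min ε (D (ω ^ a * i + y))) m
  simp only [Nat.cast_zero, mul_zero, zero_add, min_eq_left hy] at telescope
  calc ∑ i ∈ Finset.range m, reduceBy ε (ω ^ a) D (ω ^ a * i + y)
      = ∑ i ∈ Finset.range m, D (ω ^ a * i + y) + (min ε (D (ω ^ a * m + y)) - ε) := by
        rw [← telescope, ← Finset.sum_add_distrib]
        refine Finset.sum_congr rfl fun i _ => ?_
        rw [reduceBy_eq, add_mul_natCast_add, add_sub_assoc', sub_add_eq_add_sub]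
    _ = min (∑ i ∈ Finset.range m, D (ω ^ a * i + y))
          (∑ i ∈ Finset.range (m + 1), D (ω ^ a * i + y) - ε) := by
        rw [Finset.sum_range_succ, ← min_sub_sub_right, ← min_add_add_left, _root_.sub_self,
          add_zero, add_sub_assoc]

theorem LevelLE.reduceBy_opow {a : Ordinal} (hD : Antitone D) (h : LevelLE a D E)
    (ha : ε ≤ D (ω ^ a)) : LevelLE a (reduceBy ε (ω ^ a) D) (reduceBy ε (ω ^ a) E) := by
  intro y hy m
  have hDy : ε ≤ D y := ha.trans (hD hy)
  rw [sum_reduceBy_opow hDy, sum_reduceBy_opow (hDy.trans (h.le hy))]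
  exact min_le_min (h y hy m) (sub_le_sub_right (h y hy (m + 1)) ε)

theorem le_reduceBy_of_le_add {x : Ordinal} (h : ε ≤ D (δ + x)) : ε ≤ reduceBy ε δ D x := by
  rw [reduceBy, min_eq_left h]
  exact le_add_of_nonneg_left (le_max_right _ _)

/-- Splitting `δ + ω ^ c + ρ` into `δ` and `ω ^ c`, and forgetting `ρ`, gives a larger result at
level `c`. -/
theorem LevelLE.reduceBy_split (hD : Antitone D) {c ρ : Ordinal} (h : ε ≤ D (δ + ω ^ c + ρ)) :
    LevelLE c (reduceBy ε (δ + ω ^ c + ρ) D) (reduceBy ε (ω ^ c) (reduceBy ε δ D)) := by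
  intro y hy m
  have hδy : ε ≤ D (δ + y) := h.trans (hD (le_trans (by gcongr) le_self_add))
  rw [sum_reduceBy_opow (le_reduceBy_of_le_add hδy), le_min_iff, le_sub_iff_add_le]
  constructor
  · refine Finset.sum_le_sum fun i _ => reduceBy_le_reduceBy hD ε ?_ _
    exact le_self_add.trans le_self_add
  have shift (i : ℕ) : δ + (ω ^ c * ((i + 1 : ℕ) : Ordinal) + y) ≤
      δ + ω ^ c + ρ + (ω ^ c * i + y) := by
    rw [← add_mul_natCast_add, add_assoc (δ + ω ^ c), add_assoc δ]
    gcongr δ + (ω ^ c + ?_)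
    exact le_add_self
  have excess : ∑ i ∈ Finset.range m, max (D (ω ^ c * i + y) - ε) 0 ≤
      ∑ i ∈ Finset.range (m + 1), max (D (ω ^ c * i + y) - ε) 0 :=
    Finset.sum_le_sum_of_subset_of_nonneg (by simp) fun _ _ _ => le_max_right _ _
  have kept : ∑ i ∈ Finset.range m, min ε (D (δ + ω ^ c + ρ + (ω ^ c * i + y))) + ε ≤
      ∑ i ∈ Finset.range (m + 1), min ε (D (δ + (ω ^ c * i + y))) := by
    rw [Finset.sum_range_succ', Nat.cast_zero, mul_zero, zero_add, min_eq_left hδy]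
    gcongr with i
    exact hD (shift i)
  simp only [reduceBy, Finset.sum_add_distrib]
  linarith

/-! ### Canonical reductions -/

/-- Reductions whose amounts are the terms of the Cantor normal form of the total, from left to
right: after a total of `ω ^ a * q` one may reduce by a further `ω ^ a`. -/
inductive CanonicalReduces (ε : ℝ) (D₀ : Ordinal → ℝ) : Ordinal → (Ordinal → ℝ) → Prop
  | nil : CanonicalReduces ε D₀ 0 D₀
  | step {a q : Ordinal} {D : Ordinal → ℝ} : CanonicalReduces ε D₀ (ω ^ a * q) D →
      ε ≤ D (ω ^ a) → CanonicalReduces ε D₀ (ω ^ a * (q + 1)) (reduceBy ε (ω ^ a) D)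

theorem CanonicalReduces.reduces (h : CanonicalReduces ε D₀ γ D) : Reduces ε D₀ γ D := by
  induction h with
  | nil => exact .nil
  | step _ ha ih =>
    rw [mul_add_one]
    exact ih.step ha

theorem opow_mul_add_one_ne_zero (a q : Ordinal) : ω ^ a * (q + 1) ≠ 0 :=
  (mul_pos (opow_pos a omega0_pos) (Order.bot_lt_succ q)).ne'

theorem le_of_opow_dvd_opow_mul_add_one {a c q : Ordinal} (h : ω ^ a ∣ ω ^ c * (q + 1)) :
    a ≤ c := by
  by_contra! hca
  obtain ⟨r, hr⟩ : ω ^ (c + 1) ∣ ω ^ c * (q + 1) :=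
    (opow_dvd_opow ω (Order.add_one_le_of_lt hca)).trans h
  rw [opow_add, opow_one, mul_assoc, mul_right_inj' (opow_pos c omega0_pos).ne'] at hr
  exact Order.not_isSuccPrelimit_succ q (isSuccPrelimit_iff_omega0_dvd.2 ⟨r, hr⟩)

theorem opow_mul_add_one_inj {a c p q : Ordinal} :
    ω ^ a * (p + 1) = ω ^ c * (q + 1) ↔ a = c ∧ p = q := by
  refine ⟨fun h => ?_, by rintro ⟨rfl, rfl⟩; rfl⟩
  obtain rfl : a = c := le_antisymm
    (le_of_opow_dvd_opow_mul_add_one ⟨p + 1, h.symm⟩) (le_of_opow_dvd_opow_mul_add_one ⟨q + 1, h⟩)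
  rw [mul_right_inj' (opow_pos a omega0_pos).ne'] at h
  exact ⟨rfl, Order.succ_injective h⟩

theorem CanonicalReduces.exists_of_mul_add_one {a q : Ordinal}
    (h : CanonicalReduces ε D₀ (ω ^ a * (q + 1)) E) :
    ∃ D, CanonicalReduces ε D₀ (ω ^ a * q) D ∧ ε ≤ D (ω ^ a) ∧ E = reduceBy ε (ω ^ a) D := by
  generalize hγ : ω ^ a * (q + 1) = γ at h
  cases h with
  | nil => exact absurd hγ (opow_mul_add_one_ne_zero a q)
  | step h ha =>
    obtain ⟨rfl, rfl⟩ := opow_mul_add_one_inj.1 hγ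
    exact ⟨_, h, ha, rfl⟩

theorem CanonicalReduces.unique (h : CanonicalReduces ε D₀ γ D)
    (h' : CanonicalReduces ε D₀ γ E) : D = E := by
  induction h generalizing E with
  | nil =>
    generalize hγ : (0 : Ordinal) = γ at h'
    cases h' with
    | nil => rfl
    | step => exact absurd hγ.symm (opow_mul_add_one_ne_zero _ _)
  | step _ _ ih =>
    obtain ⟨D', hD', -, rfl⟩ := h'.exists_of_mul_add_one
    rw [ih hD']

theorem opow_eq_opow_mul_opow_sub {a c : Ordinal} (h : a ≤ c) :
    ω ^ c = ω ^ a * ω ^ (c - a) := by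
  rw [← opow_add, Ordinal.add_sub_cancel_of_le h]

theorem exists_eq_opow_mul_add_one (hγ : γ ≠ 0) : ∃ c q : Ordinal, γ = ω ^ c * (q + 1) := by
  induction γ using WellFoundedLT.induction with
  | _ γ ih =>
  have hlead : ω ^ log ω γ + (γ - ω ^ log ω γ) = γ :=
    Ordinal.add_sub_cancel_of_le (opow_log_le_self ω hγ)
  obtain hr | hr := eq_or_ne (γ - ω ^ log ω γ) 0
  · refine ⟨log ω γ, 0, ?_⟩
    rw [zero_add, mul_one, ← add_zero (ω ^ log ω γ), ← hr, hlead]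
  · obtain ⟨c, q, hq⟩ := ih _ (sub_omega0_opow_log_lt hγ) hr
    have hc : c ≤ log ω γ := by
      rw [← opow_le_iff_le_log one_lt_omega0 hγ]
      calc ω ^ c ≤ ω ^ c * (q + 1) := le_mul_of_one_le_right' le_add_self
        _ = γ - ω ^ log ω γ := hq.symm
        _ ≤ γ := sub_le_self _ _
    refine ⟨c, ω ^ (log ω γ - c) + q, ?_⟩
    rw [add_assoc, mul_add, ← opow_eq_opow_mul_opow_sub hc, ← hq, hlead]

/-- The step from `γ` to `μ + ω ^ c + ρ` passes through `μ`, up to a `τ` absorbed by `ω ^ c`. -/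
theorem exists_eq_add_opow_add {μ c ρ : Ordinal} (hγ : γ < μ + ω ^ c)
    (h : γ + δ = μ + ω ^ c + ρ) :
    ∃ δ' τ, δ = δ' + ω ^ c + ρ ∧ γ + δ' = μ + τ := by
  obtain hμ | hμ := le_total γ μ
  · obtain ⟨δ', rfl⟩ := exists_add_of_le hμ
    refine ⟨δ', 0, ?_, (add_zero _).symm⟩
    rwa [add_assoc γ, add_assoc γ, add_right_inj] at h
  · obtain ⟨τ, rfl⟩ := exists_add_of_le hμ
    refine ⟨0, τ, ?_, add_zero _⟩
    rw [add_assoc, add_assoc, add_right_inj, ← add_omega0_opow (lt_of_add_lt_add_left hγ),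
      add_assoc, add_right_inj] at h
    rw [h, zero_add]

theorem Reduces.exists_initial (h₀ : Antitone D₀) (h : Reduces ε D₀ γ D) {μ c ρ : Ordinal}
    (hγ : γ = μ + ω ^ c + ρ) :
    ∃ τ D₁, Reduces ε D₀ (μ + τ) D₁ ∧ ε ≤ D₁ (ω ^ c) ∧
      LevelLE c D (reduceBy ε (ω ^ c) D₁) := by
  induction h generalizing ρ with
  | nil =>
    have : ω ^ c ≤ 0 := hγ ▸ le_add_self.trans le_self_add
    exact absurd this (opow_pos c omega0_pos).not_ge
  | @step γ δ D h hδ ih =>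
    have hD := h.antitone h₀
    obtain hle | hlt := le_or_gt (μ + ω ^ c) γ
    · obtain ⟨ρ', rfl⟩ := exists_add_of_le hle
      obtain ⟨τ, D₁, hD₁, hc, hlevel⟩ := ih rfl
      exact ⟨τ, D₁, hD₁, hc, (LevelLE.of_le c (reduceBy_le hD ε δ)).trans hlevel⟩
    · obtain ⟨δ', τ, rfl, hτ⟩ := exists_eq_add_opow_add hlt hγ
      rw [add_assoc δ'] at hδ
      have hδ' : ε ≤ D δ' := hδ.trans (hD le_self_add)
      rw [← add_assoc δ'] at hδ
      refine ⟨τ, reduceBy ε δ' D, hτ ▸ h.step hδ', ?_, .reduceBy_split hD hδ⟩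
      exact le_reduceBy_of_le_add (hδ.trans (hD le_self_add))

/-- Any reduction can be replaced by the canonical one: in `Reduces.exists_initial` every step is
split at the terms of the Cantor normal form, which only increases the result at level `a`. -/
theorem Reduces.exists_canonicalReduces (h₀ : Antitone D₀) {a q ρ : Ordinal}
    (h : Reduces ε D₀ (ω ^ a * q + ρ) D) :
    ∃ E, CanonicalReduces ε D₀ (ω ^ a * q) E ∧ LevelLE a D E := by
  generalize hγ : ω ^ a * q = γ at h ⊢
  induction γ using WellFoundedLT.induction generalizing a q ρ D with
  | _ γ ih =>
  obtain rfl | hne := eq_or_ne γ 0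
  · exact ⟨D₀, .nil, .of_le a (h.le h₀)⟩
  obtain ⟨c, p, rfl⟩ := exists_eq_opow_mul_add_one hne
  have hac : a ≤ c := le_of_opow_dvd_opow_mul_add_one ⟨q, hγ.symm⟩
  obtain ⟨τ, D₁, hD₁, hc, hlevel⟩ := h.exists_initial h₀ (by rw [mul_add_one])
  have hlt : ω ^ c * p < ω ^ c * (p + 1) := by
    rw [mul_add_one]
    exact lt_add_of_pos_right _ (opow_pos c omega0_pos)
  obtain ⟨E, hE, hD₁E⟩ := ih _ hlt rfl hD₁
  refine ⟨_, hE.step (hc.trans (hD₁E.le le_rfl)), ?_⟩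
  exact (hlevel.trans (hD₁E.reduceBy_opow (hD₁.antitone h₀) hc)).of_level_le hac

theorem exists_canonicalReduces_of_le (h₀ : Antitone D₀) {γ' : Ordinal}
    (hγ : γ ∈ reductionTotals ε D₀) (h : γ' ≤ γ) : ∃ E, CanonicalReduces ε D₀ γ' E := by
  obtain ⟨D, hD⟩ := hγ
  obtain ⟨ρ, rfl⟩ := exists_add_of_le h
  rw [← one_mul γ', ← opow_zero ω] at hD ⊢
  obtain ⟨E, hE, -⟩ := hD.exists_canonicalReduces h₀
  exact ⟨E, hE⟩

theorem CanonicalReduces.sum_add_mul_le {b q : Ordinal}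
    (hD : CanonicalReduces ε D₀ (ω ^ b * q) D) (k m : ℕ)
    (hE : CanonicalReduces ε D₀ (ω ^ b * (q + k)) E) :
    ∑ i ∈ Finset.range m, E (ω ^ b * i + ω ^ b) + k * ε ≤
      ∑ i ∈ Finset.range (m + k), D (ω ^ b * i + ω ^ b) := by
  induction k generalizing E m with
  | zero =>
    rw [Nat.cast_zero, add_zero] at hE
    rw [hE.unique hD, Nat.cast_zero, zero_mul, add_zero, add_zero]
  | succ k ih =>
    rw [Nat.cast_succ, ← add_assoc] at hE
    obtain ⟨E', hE', hb, rfl⟩ := hE.exists_of_mul_add_one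
    have hstep := min_le_right (∑ i ∈ Finset.range m, E' (ω ^ b * i + ω ^ b))
      (∑ i ∈ Finset.range (m + 1), E' (ω ^ b * i + ω ^ b) - ε)
    have hih := ih (m + 1) hE'
    rw [sum_reduceBy_opow hb, Nat.cast_succ, add_comm k, ← add_assoc]
    linarith

theorem CanonicalReduces.mul_le_sum {a b q : Ordinal} (hD : CanonicalReduces ε D₀ (ω ^ a * q) D)
    (h : ∀ γ < ω ^ a * (q + 1), ∃ E, CanonicalReduces ε D₀ γ E) (hba : b < a) (k : ℕ) :
    k * ε ≤ ∑ i ∈ Finset.range k, D (ω ^ b * i + ω ^ b) := by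
  have hmul : ω ^ a * q = ω ^ b * (ω ^ (a - b) * q) := by
    rw [← mul_assoc, ← opow_eq_opow_mul_opow_sub hba.le]
  have hlt : ω ^ b * (ω ^ (a - b) * q + k) < ω ^ a * (q + 1) := by
    rw [mul_add, ← hmul, mul_add_one]
    gcongr
    exact opow_mul_lt_opow (natCast_lt_omega0 k) hba
  obtain ⟨E, hE⟩ := h _ hlt
  rw [hmul] at hD
  simpa using hD.sum_add_mul_le k 0 hE

theorem le_of_forall_lt_of_isSuccLimit {F : Ordinal → ℝ} {c : ℝ} {a : Ordinal}
    (hF : Continuous F) (ha : Order.IsSuccLimit a) (h : ∀ b < a, c ≤ F b) : c ≤ F a := by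
  have hmem : a ∈ closure (Iio a) := ha.isLUB_Iio.mem_closure ⟨⊥, ha.bot_lt⟩
  exact closure_minimal h (isClosed_Ici.preimage hF) hmem

theorem tendsto_opow_mul_natCast_add_opow (b : Ordinal) :
    Tendsto (fun i : ℕ => ω ^ b * i + ω ^ b) atTop (nhds (ω ^ Order.succ b)) := by
  refine tendsto_atTop_isLUB (fun i j hij => by gcongr) ⟨?_, fun u hu => ?_⟩
  · rintro _ ⟨i, rfl⟩
    dsimp only
    rw [← mul_add_one, ← Nat.cast_succ]
    exact (opow_mul_lt_opow (natCast_lt_omega0 _) (Order.lt_succ b)).le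
  · by_contra! hlt
    obtain ⟨n, hn⟩ := lt_omega0_opow_succ.1 hlt
    exact (hn.trans_le (le_self_add.trans (hu ⟨n, rfl⟩))).false

/-- If every total below `ω ^ a * q + ω ^ a` is attained, then so is `ω ^ a * q + ω ^ a`: for
successor `a` the bounds `k * ε ≤ ∑ i < k, D (ω ^ (a - 1) * (i + 1))` give `ε ≤ D (ω ^ a)` by
Cesàro averaging, for limit `a` already `k = 1` suffices. -/
theorem CanonicalReduces.le_apply_opow {a q : Ordinal}
    (hD : CanonicalReduces ε D₀ (ω ^ a * q) D) (hcont : Continuous D) (ha : a ≠ 0)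
    (h : ∀ γ < ω ^ a * (q + 1), ∃ E, CanonicalReduces ε D₀ γ E) : ε ≤ D (ω ^ a) := by
  obtain rfl | ⟨b, rfl⟩ | hlim := zero_or_succ_or_isSuccLimit a
  · exact absurd rfl ha
  · refine ge_of_tendsto
      ((hcont.tendsto _).comp (tendsto_opow_mul_natCast_add_opow b)).cesaro ?_
    filter_upwards [eventually_gt_atTop 0] with k hk
    rw [le_inv_mul_iff₀ (by positivity)]
    exact hD.mul_le_sum h (Order.lt_succ b) k
  · refine le_of_forall_lt_of_isSuccLimit (F := fun b => D (ω ^ b))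
      (hcont.comp (isNormal_opow one_lt_omega0).continuous) hlim fun b hb => ?_
    simpa using hD.mul_le_sum h hb 1

theorem mem_reductionTotals_of_isLUB (hε : 0 ≤ ε) (h₀ : IsDistribution A D₀) {S : Set Ordinal}
    {σ : Ordinal} (hS : S ⊆ reductionTotals ε D₀) (hσ : IsLUB S σ) :
    σ ∈ reductionTotals ε D₀ := by
  obtain rfl | hne := eq_or_ne σ 0
  · exact ⟨D₀, .nil⟩
  obtain ⟨a, q, rfl⟩ := exists_eq_opow_mul_add_one hne
  obtain rfl | ha := eq_or_ne a 0
  · refine hS (hσ.mem_of_not_isSuccPrelimit ?_)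
    rw [opow_zero, one_mul]
    exact Order.not_isSuccPrelimit_succ q
  have hbelow (γ) (hγ : γ < ω ^ a * (q + 1)) : ∃ E, CanonicalReduces ε D₀ γ E := by
    obtain ⟨s, hs, hγs⟩ := (lt_isLUB_iff hσ).1 hγ
    exact exists_canonicalReduces_of_le h₀.antitone (hS hs) hγs.le
  obtain ⟨D, hD⟩ := hbelow (ω ^ a * q) <| by
    rw [mul_add_one]
    exact lt_add_of_pos_right _ (opow_pos a omega0_pos)
  have hcont := (hD.reduces.isDistribution hε h₀).continuous
  exact ⟨_, (hD.step (hD.le_apply_opow hcont ha hbelow)).reduces⟩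

/-! ### The gap -/

/-- If `D` and `E` are the distribution functions of `g ≤ h` on `(0,A]`, then `D α - E (α + 1)` is,
when positive, the measure of `{g = h = α}`; so the condition says that `g < h` on a set of
measure at least `ε`. -/
def HasGap (ε A : ℝ) (D E : Ordinal → ℝ) : Prop :=
  ∀ F : Finset Ordinal, ∑ α ∈ F, max 0 (D α - E (α + 1)) ≤ A - ε

theorem max_zero_sub_add_le (ε a b : ℝ) :
    max 0 (max (a - ε) 0 - max (b - ε) 0) + max 0 (min ε a - min ε b) ≤ max 0 (a - b) := by
  grind

theorem HasGap.reduceBy (h : HasGap ε A D E) (δ : Ordinal) :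
    HasGap ε A (reduceBy ε δ D) (reduceBy ε δ E) := by
  intro F
  set G : Finset Ordinal := F.image (δ + ·)
  let excess (α : Ordinal) := max 0 (max (D α - ε) 0 - max (E (α + 1) - ε) 0)
  let kept (α : Ordinal) := max 0 (min ε (D α) - min ε (E (α + 1)))
  calc ∑ α ∈ F, max 0 (_root_.reduceBy ε δ D α - _root_.reduceBy ε δ E (α + 1))
      ≤ ∑ α ∈ F, (excess α + kept (δ + α)) := by
        refine Finset.sum_le_sum fun α _ => ?_
        rw [_root_.reduceBy, _root_.reduceBy, add_sub_add_comm, ← add_assoc δ]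
        exact max_le (add_nonneg (le_max_left _ _) (le_max_left _ _))
          (add_le_add (le_max_right _ _) (le_max_right _ _))
    _ = ∑ α ∈ F, excess α + ∑ α ∈ G, kept α := by
        rw [Finset.sum_add_distrib, Finset.sum_image (add_right_injective δ).injOn]
    _ ≤ ∑ α ∈ F ∪ G, excess α + ∑ α ∈ F ∪ G, kept α := by
        refine add_le_add ?_ ?_ <;>
          refine Finset.sum_le_sum_of_subset_of_nonneg ?_ fun _ _ _ => le_max_left _ _
        exacts [Finset.subset_union_left, Finset.subset_union_right]
    _ ≤ ∑ α ∈ F ∪ G, max 0 (D α - E (α + 1)) := by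
        rw [← Finset.sum_add_distrib]
        exact Finset.sum_le_sum fun α _ => max_zero_sub_add_le ε _ _
    _ ≤ A - ε := h _

theorem Reduces.exists_reduces_hasGap (h : Reduces ε D₀ γ D) (hle : D₀ ≤ E₀)
    (hgap : HasGap ε A D₀ E₀) : ∃ E, Reduces ε E₀ γ E ∧ D ≤ E ∧ HasGap ε A D E := by
  induction h with
  | nil => exact ⟨E₀, .nil, hle, hgap⟩
  | @step γ δ D _ hδ ih =>
    obtain ⟨E, hE, hDE, hgap⟩ := ih
    exact ⟨_, hE.step (hδ.trans (hDE δ)), reduceBy_mono ε δ hDE, hgap.reduceBy δ⟩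

/-- At any stage the gap forces `ε ≤ E 1`, which leaves room for one more reduction, by `1`. -/
theorem add_one_mem_reductionTotals (hε : 0 ≤ ε) (h₀ : IsDistribution A D₀) (hle : D₀ ≤ E₀)
    (hgap : HasGap ε A D₀ E₀) (hγ : γ ∈ reductionTotals ε D₀) :
    γ + 1 ∈ reductionTotals ε E₀ := by
  obtain ⟨D, hD⟩ := hγ
  obtain ⟨E, hE, -, hgap⟩ := hD.exists_reduces_hasGap hle hgap
  refine ⟨_, hE.step (δ := 1) ?_⟩
  have hgap_zero := hgap {0}
  rw [Finset.sum_singleton, zero_add, (hD.isDistribution hε h₀).map_zero] at hgap_zero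
  linarith [le_max_right 0 (A - E 1)]

theorem Reduces.exists_of_le (h : Reduces ε D₀ γ D) (hle : D₀ ≤ E₀) :
    ∃ E, Reduces ε E₀ γ E ∧ D ≤ E := by
  induction h with
  | nil => exact ⟨E₀, .nil, hle⟩
  | @step _ δ _ _ hδ ih =>
    obtain ⟨E, hE, hDE⟩ := ih
    exact ⟨_, hE.step (hδ.trans (hDE δ)), reduceBy_mono ε δ hDE⟩

theorem Reduces.finite_range (h : Reduces ε D₀ γ D) (h₀ : (range D₀).Finite) :
    (range D).Finite := by
  induction h with
  | nil => exact h₀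
  | @step _ δ D _ _ ih =>
    refine (ih.image2 (fun a b => max (a - ε) 0 + min ε b) ih).subset ?_
    rintro _ ⟨x, rfl⟩
    exact ⟨D x, ⟨x, rfl⟩, D (δ + x), ⟨δ + x, rfl⟩, rfl⟩

theorem Reduces.exists_finset (h : Reduces ε D₀ γ D) (G : Finset Ordinal) :
    ∃ F : Finset Ordinal, ∀ E₀ : Ordinal → ℝ, EqOn E₀ D₀ F →
      ∃ E, Reduces ε E₀ γ E ∧ EqOn E D G := by
  induction h generalizing G with
  | nil => exact ⟨G, fun E₀ h => ⟨E₀, .nil, h⟩⟩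
  | @step γ δ D _ hδ ih =>
    obtain ⟨F, hF⟩ := ih (G ∪ G.image (δ + ·) ∪ {δ})
    refine ⟨F, fun E₀ hE₀ => ?_⟩
    obtain ⟨E, hE, hED⟩ := hF E₀ hE₀
    refine ⟨reduceBy ε δ E, hE.step (hδ.trans_eq (hED (by simp)).symm), fun x hx => ?_⟩
    rw [reduceBy, reduceBy, hED (x := x) (by simp_all), hED (x := δ + x) (by simp_all)]

end Reduction

section DistributionFunction

variable {ε A : ℝ} {f g h k u v : ℝ → Ordinal} {D : Ordinal → ℝ} {x y γ δ : Ordinal}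

/-- The superlevel set `{t ∈ (0,∞) : u t ≥ x}`. -/
def superlev (u : ℝ → Ordinal) (x : Ordinal) : Set ℝ := {t | 0 < t ∧ x ≤ u t}

/-- `D x` is the right endpoint of the superlevel set `{f ≥ x}` of a non-increasing left-continuous
function `f`. The value `D 0` is irrelevant: this leaves room for `IsDistribution`, where `D 0` is
the length of the interval on which `f` is considered. -/
def HasDistribution (f : ℝ → Ordinal) (D : Ordinal → ℝ) : Prop :=
  ∀ x, 0 < x → superlev f x = Ioc 0 (D x)

theorem HasDistribution.le_iff (hf : HasDistribution f D) (hx : 0 < x) {t : ℝ} (ht : 0 < t) :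
    x ≤ f t ↔ t ≤ D x := by
  simpa [superlev, ht] using congrArg (t ∈ ·) (hf x hx)

theorem HasDistribution.nonIncr (hf : HasDistribution f D) : NonIncr f := by
  intro s t hs hst
  obtain hft | hft := eq_zero_or_pos (f t)
  · exact hft ▸ zero_le
  · exact (hf.le_iff hft hs).2 (hst.trans ((hf.le_iff hft (hs.trans_le hst)).1 le_rfl))

theorem HasDistribution.leftCont (hf : HasDistribution f D) : LeftCont f := by
  intro t ht
  have hpos : 0 < f t + 1 := Order.bot_lt_succ (f t)
  have hlt : D (f t + 1) < t := by
    rw [← not_le, ← hf.le_iff hpos ht, not_le, Order.lt_add_one_iff]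
  refine ⟨min t (t - D (f t + 1)), lt_min ht (sub_pos.2 hlt), fun s hs hst => ?_⟩
  have hs₀ : 0 < s := by grind
  refine le_antisymm ?_ (hf.nonIncr s t hs₀ hst)
  rw [← Order.lt_add_one_iff, ← not_le, hf.le_iff hpos hs₀]
  grind

theorem HasDistribution.vanishesBeyond (hf : HasDistribution f D) (hD : IsDistribution A D) :
    VanishesBeyond f A := by
  intro t ht
  by_contra hne
  have ht₀ : 0 < t := ((hD.nonneg 0).trans_eq hD.map_zero).trans_lt ht
  exact ht.not_ge (((hf.le_iff (pos_iff_ne_zero.2 hne) ht₀).1 le_rfl).trans (hD.le _))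

theorem HasDistribution.finiteRange (hf : HasDistribution f D) (hD : (range D).Finite) :
    FiniteRange f := by
  suffices h : (f '' Ioi 0 \ {0}).Finite from
    (h.union (finite_singleton 0)).subset (by rw [sdiff_union_self]; exact subset_union_left)
  have le_of_eq {s t : ℝ} (hs : 0 < s) (hs' : f s ≠ 0) (ht' : f t ≠ 0)
      (h : D (f s) = D (f t)) : f t ≤ f s := by
    rw [hf.le_iff (pos_iff_ne_zero.2 ht') hs, ← h, ← hf.le_iff (pos_iff_ne_zero.2 hs') hs]
  have inj : InjOn D (f '' Ioi 0 \ {0}) := by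
    rintro _ ⟨⟨s, hs, rfl⟩, hs'⟩ _ ⟨⟨t, ht, rfl⟩, ht'⟩ h
    exact le_antisymm (le_of_eq ht ht' hs' h.symm) (le_of_eq hs hs' ht' h)
  exact (hD.subset (image_subset_range _ _)).of_finite_image inj

theorem HasDistribution.volume_superlev (hf : HasDistribution f D) (hx : 0 < x) :
    volume (superlev f x) = ENNReal.ofReal (D x) := by
  rw [hf x hx, Real.volume_Ioc, _root_.sub_zero]

theorem HasDistribution.finite_range_of_finiteRange (hf : HasDistribution f D) (hD : 0 ≤ D)
    (hfin : FiniteRange f) : (range D).Finite := by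
  have hpos : (D '' Ioi 0).Finite := by
    refine (hfin.powerset.image fun S => (volume {t : ℝ | 0 < t ∧ f t ∈ S}).toReal).subset ?_
    rintro _ ⟨x, hx, rfl⟩
    refine ⟨f '' Ioi 0 ∩ Ici x, inter_subset_left, ?_⟩
    have : {t : ℝ | 0 < t ∧ f t ∈ f '' Ioi 0 ∩ Ici x} = superlev f x := by
      ext t
      simpa [superlev] using fun ht _ => ⟨t, ht, rfl⟩
    dsimp only
    rw [this, hf.volume_superlev hx, ENNReal.toReal_ofReal (hD x)]
  refine (hpos.insert (D 0)).subset ?_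
  rintro _ ⟨x, rfl⟩
  exact (eq_zero_or_pos x).imp (congrArg D) fun hx => ⟨x, hx, rfl⟩

theorem HasDistribution.eqOn (hf : HasDistribution f D) (hg : HasDistribution g D) :
    EqOn f g (Ioi 0) := fun t ht => by
  refine eq_of_forall_le_iff fun x => ?_
  obtain rfl | hx := eq_zero_or_pos x
  · simp
  · rw [hf.le_iff hx ht, hg.le_iff hx ht]

theorem superlev_eq_Ioc_of_volume (h₁ : NonIncr f) (h₂ : LeftCont f) {d : ℝ}
    (hd : volume (superlev f x) = ENNReal.ofReal d) : superlev f x = Ioc 0 d := by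
  ext t
  refine ⟨fun ⟨ht, hx⟩ => ⟨ht, ?_⟩, fun ⟨ht, htd⟩ => ⟨ht, ?_⟩⟩
  · have hsub : Ioc 0 t ⊆ superlev f x := fun s hs => ⟨hs.1, hx.trans (h₁ s t hs.1 hs.2)⟩
    have := measure_mono (μ := volume) hsub
    rw [hd, Real.volume_Ioc, _root_.sub_zero] at this
    exact ENNReal.ofReal_le_ofReal_iff'.1 this |>.resolve_right ht.not_ge
  · by_contra hx
    obtain ⟨η, hη, hconst⟩ := h₂ t ht
    have hsub : superlev f x ⊆ Ioc 0 (t - η) := fun s ⟨hs, hxs⟩ => by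
      refine ⟨hs, not_lt.1 fun hlt => hx ?_⟩
      obtain hst | hst := le_total s t
      · exact hconst s hlt hst ▸ hxs
      · exact hxs.trans (h₁ t s ht hst)
    have := measure_mono (μ := volume) hsub
    rw [hd, Real.volume_Ioc, _root_.sub_zero, ENNReal.ofReal_le_ofReal_iff'] at this
    grind

theorem IsDistribution.exists_hasDistribution (hD : IsDistribution A D) :
    ∃ f, HasDistribution f D := by
  refine ⟨fun t => sSup {x | t ≤ D x}, fun x hx => Set.ext fun t => and_congr_right fun ht => ?_⟩
  obtain ⟨B, hB⟩ := hD.exists_lt t ht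
  have hbdd : BddAbove {x | t ≤ D x} :=
    ⟨B, fun y hy => (hD.antitone.reflect_lt (hB.trans_le hy)).le⟩
  refine ⟨fun hxs => ?_, fun htx => le_csSup hbdd htx⟩
  change x ≤ sSup {x | t ≤ D x} at hxs
  have hne : {x | t ≤ D x}.Nonempty := by
    by_contra! hempty
    rw [hempty, csSup_empty] at hxs
    exact hx.not_ge hxs
  have hclosed : IsClosed {x | t ≤ D x} := isClosed_Ici.preimage hD.continuous
  exact (hclosed.csSup_mem hne hbdd).trans (hD.antitone hxs)

theorem continuous_of_forall_isSuccLimit (hD : Antitone D)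
    (hlim : ∀ x, Order.IsSuccLimit x → ∀ c, (∀ y < x, c ≤ D y) → c ≤ D x) : Continuous D := by
  refine OrderTopology.continuous_iff.2 fun c => ⟨?_, ?_⟩ <;>
    refine SuccOrder.isOpen_iff.2 fun x hx hx_lim => ?_
  · obtain ⟨y, hy⟩ := not_isMin_iff.1 hx_lim.1
    exact ⟨y, hy, fun z hz => lt_of_lt_of_le hx (hD hz.2.le)⟩
  · obtain ⟨c', hxc', hc'⟩ := exists_between (show D x < c from hx)
    obtain ⟨y, hy, hyc'⟩ : ∃ y < x, D y < c' := by
      by_contra! h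
      exact hxc'.not_ge (hlim x hx_lim c' h)
    exact ⟨y, hy, fun z hz => (hD hz.1.le).trans_lt (hyc'.trans hc')⟩

/-! ### The distribution function of an arbitrary function -/

/-- The distribution function on `(0,A]` of the largest non-increasing function below `g`: its value
at `x` is the length of the longest interval `(0,t] ⊆ (0,A]` on which `g ≥ x`. -/
noncomputable def distribution (A : ℝ) (g : ℝ → Ordinal) (x : Ordinal) : ℝ :=
  sSup {t ∈ Icc 0 A | ∀ s ∈ Ioc 0 t, x ≤ g s}

theorem bddAbove_distribution_set (A : ℝ) (g : ℝ → Ordinal) (x : Ordinal) :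
    BddAbove {t ∈ Icc 0 A | ∀ s ∈ Ioc 0 t, x ≤ g s} :=
  ⟨A, fun _ ht => ht.1.2⟩

theorem nonempty_distribution_set (hA : 0 ≤ A) (g : ℝ → Ordinal) (x : Ordinal) :
    {t ∈ Icc 0 A | ∀ s ∈ Ioc 0 t, x ≤ g s}.Nonempty :=
  ⟨0, ⟨le_rfl, hA⟩, by simp⟩

theorem le_distribution {t : ℝ} (ht : t ∈ Icc 0 A) (h : ∀ s ∈ Ioc 0 t, x ≤ g s) :
    t ≤ distribution A g x :=
  le_csSup (bddAbove_distribution_set A g x) ⟨ht, h⟩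

theorem le_of_lt_distribution (hA : 0 ≤ A) {t : ℝ} (ht₀ : 0 < t) (ht : t < distribution A g x) :
    x ≤ g t := by
  obtain ⟨t', ⟨-, hx⟩, htt'⟩ := exists_lt_of_lt_csSup (nonempty_distribution_set hA g x) ht
  exact hx t ⟨ht₀, htt'.le⟩

theorem distribution_le (hA : 0 ≤ A) (g : ℝ → Ordinal) (x : Ordinal) : distribution A g x ≤ A :=
  csSup_le (nonempty_distribution_set hA g x) fun _ ht => ht.1.2

theorem distribution_le_distribution (hA : 0 ≤ A) (hgh : ∀ t, 0 < t → x ≤ g t → y ≤ h t) :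
    distribution A g x ≤ distribution A h y :=
  csSup_le_csSup (bddAbove_distribution_set A h y) (nonempty_distribution_set hA g x)
    fun _ ht => ⟨ht.1, fun s hs => hgh s hs.1 (ht.2 s hs)⟩

theorem distribution_mono (hA : 0 ≤ A) (hgh : ∀ t, 0 < t → g t ≤ h t) :
    distribution A g ≤ distribution A h :=
  fun _ => distribution_le_distribution hA fun t ht hx => hx.trans (hgh t ht)

theorem isDistribution_distribution (hA : 0 ≤ A) (g : ℝ → Ordinal) :
    IsDistribution A (distribution A g) := by
  have nonneg : 0 ≤ distribution A g := fun x => le_distribution ⟨le_rfl, hA⟩ (by simp)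
  have antitone : Antitone (distribution A g) := fun x y hxy =>
    distribution_le_distribution hA fun _ _ => hxy.trans
  refine ⟨antitone, nonneg, ?_, continuous_of_forall_isSuccLimit antitone ?_, fun t ht => ?_⟩
  · exact (distribution_le hA g 0).antisymm (le_distribution ⟨hA, le_rfl⟩ (by simp))
  · refine fun x hx c hc => le_of_forall_lt_imp_le_of_dense fun b hb => ?_
    obtain hb₀ | hb₀ := le_total b 0
    · exact hb₀.trans (nonneg x)
    have hbA : b ≤ A := hb.le.trans ((hc 0 hx.bot_lt).trans (distribution_le hA g 0))
    refine le_distribution ⟨hb₀, hbA⟩ fun s hs => hx.le_iff_forall_le.2 fun y hy => ?_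
    exact le_of_lt_distribution hA hs.1 (hs.2.trans_lt (hb.trans_le (hc y hy)))
  · refine ⟨g (t / 2) + 1, not_le.1 fun hle => ?_⟩
    exact (Order.lt_add_one_iff.2 le_rfl).not_ge
      (le_of_lt_distribution hA (half_pos ht) ((half_lt_self ht).trans_le hle))

theorem hasDistribution_distribution (hA : 0 ≤ A) (h₁ : NonIncr g) (h₂ : LeftCont g)
    (hvan : VanishesBeyond g A) : HasDistribution g (distribution A g) := by
  refine fun x hx => Set.ext fun t => and_congr_right fun ht => ⟨fun hxt => ?_, fun htx => ?_⟩
  · refine le_distribution ⟨ht.le, not_lt.1 fun htA => ?_⟩ fun s hs => hxt.trans (h₁ s t hs.1 hs.2)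
    exact hx.not_ge (hxt.trans_eq (hvan t htA))
  · obtain ⟨η, hη, hconst⟩ := h₂ t ht
    have hs : max (t / 2) (t - η / 2) < t := by grind
    rw [← hconst _ (by grind) hs.le]
    exact le_of_lt_distribution hA (by grind) (hs.trans_le htx)

/-! ### Rearrangement and compression -/

theorem lev_eq_diff (u : ℝ → Ordinal) (α : Ordinal) :
    lev u α = superlev u α \ superlev u (α + 1) := by
  ext t
  simp only [lev, superlev, mem_ofPred_eq, Set.mem_sdiff, Order.add_one_le_iff]
  grind

theorem NonIncr.measurableSet_superlev (hf : NonIncr f) (x : Ordinal) :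
    MeasurableSet (superlev f x) := by
  refine OrdConnected.measurableSet ⟨fun s hs t ht r hr => ⟨hs.1.trans_le hr.1, ?_⟩⟩
  exact ht.2.trans (hf r t (hs.1.trans_le hr.1) hr.2)

theorem volume_superlev_eq_sum_volume_lev (hu : ∀ x, 0 < x → MeasurableSet (superlev u x))
    {S : Finset Ordinal} (hS : ∀ t, 0 < t → u t ∈ S) (hx : 0 < x) :
    volume (superlev u x) = ∑ α ∈ S with x ≤ α, volume (lev u α) := by
  have hunion : superlev u x = ⋃ α ∈ S.filter (x ≤ ·), lev u α := by
    ext t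
    simp only [superlev, lev, mem_ofPred_eq, Finset.mem_filter, mem_iUnion, exists_prop]
    exact ⟨fun ⟨ht, h⟩ => ⟨u t, ⟨hS t ht, h⟩, ht, rfl⟩, fun ⟨α, h, ht, hα⟩ => ⟨ht, hα ▸ h.2⟩⟩
  rw [hunion, measure_biUnion_finset]
  · exact fun α _ β _ hne => disjoint_left.2 fun t hα hβ => hne (hα.2.symm.trans hβ.2)
  · intro α hα
    rw [lev_eq_diff]
    have hα₀ : 0 < α := hx.trans_le (Finset.mem_filter.1 hα).2
    exact (hu α hα₀).diff (hu _ (hα₀.trans (Order.lt_add_one_iff.2 le_rfl)))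

theorem IsRearrangement.hasDistribution (hfu : IsRearrangement f u) (hf : FiniteRange f)
    (hu : FiniteRange u) (hmeas : ∀ x, 0 < x → MeasurableSet (superlev u x))
    (hvol : ∀ x, 0 < x → volume (superlev u x) = ENNReal.ofReal (D x)) :
    HasDistribution f D := by
  intro x hx
  obtain ⟨h₁, h₂, hlev⟩ := hfu
  refine superlev_eq_Ioc_of_volume h₁ h₂ ?_
  set S : Finset Ordinal := hf.toFinset ∪ hu.toFinset
  have hfS (t : ℝ) (ht : 0 < t) : f t ∈ S :=
    Finset.mem_union_left _ (hf.mem_toFinset.2 ⟨t, ht, rfl⟩)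
  have huS (t : ℝ) (ht : 0 < t) : u t ∈ S :=
    Finset.mem_union_right _ (hu.mem_toFinset.2 ⟨t, ht, rfl⟩)
  rw [← hvol x hx, volume_superlev_eq_sum_volume_lev hmeas huS hx,
    volume_superlev_eq_sum_volume_lev (fun x _ => h₁.measurableSet_superlev x) hfS hx]
  exact Finset.sum_congr rfl fun α hα => hlev α (hx.trans_le (Finset.mem_filter.1 hα).2)

theorem HasDistribution.isRearrangement (hf : HasDistribution f D)
    (hmeas : ∀ x, 0 < x → MeasurableSet (superlev u x))
    (hvol : ∀ x, 0 < x → volume (superlev u x) = ENNReal.ofReal (D x)) : IsRearrangement f u := by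
  refine ⟨hf.nonIncr, hf.leftCont, fun α hα => ?_⟩
  have hα' : 0 < α + 1 := Order.bot_lt_succ α
  have subset (v : ℝ → Ordinal) : superlev v (α + 1) ⊆ superlev v α :=
    fun t ht => ⟨ht.1, (Order.le_succ α).trans ht.2⟩
  rw [lev_eq_diff, lev_eq_diff, measure_sdiff (subset u) (hmeas _ hα').nullMeasurableSet
      (by simp [hvol _ hα']), measure_sdiff (subset f)
      (hf.nonIncr.measurableSet_superlev _).nullMeasurableSet (by simp [hf.volume_superlev hα']),
    hvol α hα, hvol _ hα', hf.volume_superlev hα, hf.volume_superlev hα']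

theorem le_sub_iff_add_le_of_pos {α : Ordinal} (hx : 0 < x) : x ≤ α - δ ↔ δ + x ≤ α := by
  obtain h | h := le_or_gt δ α
  · exact le_sub_of_le h
  · rw [Ordinal.sub_eq_zero_iff_le.2 h.le]
    exact iff_of_false hx.not_ge (h.trans_le le_self_add).not_ge

theorem superlev_subInd (hf : HasDistribution f D) (hε : 0 < ε) (δ : Ordinal) (hx : 0 < x) :
    superlev (subInd f δ (Ioc 0 ε)) x = Ioc 0 (min ε (D (δ + x))) ∪ Ioc ε (D x) := by
  ext t
  obtain ht | ht := le_or_gt t 0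
  · simp [superlev, ht.not_gt, (ht.trans_lt hε).not_gt]
  obtain htε | htε := le_or_gt t ε
  · simp [superlev, subInd, ht, htε, le_sub_iff_add_le_of_pos hx,
      hf.le_iff (hx.trans_le le_add_self) ht]
  · simp [superlev, subInd, ht, htε.not_ge, htε, hf.le_iff hx ht]

theorem measurableSet_superlev_subInd (hf : HasDistribution f D) (hε : 0 < ε) (δ : Ordinal)
    (hx : 0 < x) : MeasurableSet (superlev (subInd f δ (Ioc 0 ε)) x) := by
  rw [superlev_subInd hf hε δ hx]
  exact measurableSet_Ioc.union measurableSet_Ioc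

theorem volume_superlev_subInd (hf : HasDistribution f D) (hD : 0 ≤ D) (hε : 0 < ε) (δ : Ordinal)
    (hx : 0 < x) :
    volume (superlev (subInd f δ (Ioc 0 ε)) x) = ENNReal.ofReal (reduceBy ε δ D x) := by
  rw [superlev_subInd hf hε δ hx, measure_union (disjoint_left.2 fun t ht ht' => ?_)
    measurableSet_Ioc, Real.volume_Ioc, Real.volume_Ioc, reduceBy, _root_.sub_zero, add_comm,
    ENNReal.ofReal_add (le_max_right _ _) (le_min hε.le (hD _)), ENNReal.ofReal_max,
    ENNReal.ofReal_zero, max_zero]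
  exact ht'.1.not_ge (ht.2.trans (min_le_left _ _))

theorem FiniteRange.subInd (hf : FiniteRange f) (δ : Ordinal) (I : Set ℝ) :
    FiniteRange (subInd f δ I) := by
  refine (hf.union (hf.image (· - δ))).subset ?_
  rintro _ ⟨t, ht, rfl⟩
  unfold _root_.subInd
  split_ifs
  exacts [.inr ⟨f t, ⟨t, ht, rfl⟩, rfl⟩, .inl ⟨t, ht, rfl⟩]

theorem IsRearrangement.eqOn (hfu : IsRearrangement f u) (hf : FiniteRange f) (hu : FiniteRange u)
    (hD : HasDistribution u D) : EqOn f u (Ioi 0) :=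
  (hfu.hasDistribution hf hu (fun x _ => hD.nonIncr.measurableSet_superlev x)
    fun _ hx => hD.volume_superlev hx).eqOn hD

theorem FiniteRange.congr (hf : FiniteRange f) (h : EqOn f g (Ioi 0)) : FiniteRange g := by
  rwa [FiniteRange, ← h.image_eq]

theorem IsRearrangement.congr (hfu : IsRearrangement f u) (h : EqOn u v (Ioi 0)) :
    IsRearrangement f v := by
  refine ⟨hfu.1, hfu.2.1, fun α hα => (hfu.2.2 α hα).trans (congrArg volume ?_)⟩
  exact Set.ext fun t => and_congr_right fun ht => by rw [h ht]

/-- The function `f + γ·1_I`, with `γ` added on the left. -/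
noncomputable def addInd (f : ℝ → Ordinal) (γ : Ordinal) (I : Set ℝ) : ℝ → Ordinal :=
  fun t => if t ∈ I then γ + f t else f t

theorem addInd_zero (f : ℝ → Ordinal) (I : Set ℝ) : addInd f 0 I = f := by
  funext t
  simp [addInd]

theorem addInd_add (f : ℝ → Ordinal) (γ δ : Ordinal) (I : Set ℝ) :
    addInd f (γ + δ) I = addInd (addInd f δ I) γ I := by
  grind [addInd]

theorem subInd_addInd_add (f : ℝ → Ordinal) (γ δ : Ordinal) (I : Set ℝ) :
    subInd (addInd f γ I) (γ + δ) I = subInd f δ I := by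
  funext t
  by_cases ht : t ∈ I <;> simp [subInd, addInd, ht, add_sub_add_cancel]

theorem subInd_addInd (f : ℝ → Ordinal) (γ : Ordinal) (I : Set ℝ) :
    subInd (addInd f γ I) γ I = f := by
  funext t
  by_cases ht : t ∈ I <;> simp [subInd, addInd, ht]

theorem FiniteRange.addInd (hf : FiniteRange f) (γ : Ordinal) (I : Set ℝ) :
    FiniteRange (addInd f γ I) := by
  refine (hf.union (hf.image (γ + ·))).subset ?_
  rintro _ ⟨t, ht, rfl⟩
  unfold _root_.addInd
  split_ifs
  exacts [.inr ⟨f t, ⟨t, ht, rfl⟩, rfl⟩, .inl ⟨t, ht, rfl⟩]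

theorem VanishesBeyond.addInd (hf : VanishesBeyond f A) (hεA : ε ≤ A) (γ : Ordinal) :
    VanishesBeyond (addInd f γ (Ioc 0 ε)) A := fun t ht => by
  rw [_root_.addInd, if_neg fun h => (hεA.trans_lt ht).not_ge h.2, hf t ht]

theorem HasDistribution.addInd (hf : HasDistribution f D) (hD : IsDistribution A D) (hεA : ε ≤ A)
    (γ : Ordinal) : HasDistribution (addInd f γ (Ioc 0 ε))
      fun x => max (D x) (min ε (D (x - γ))) := by
  refine fun x hx => Set.ext fun t => and_congr_right fun ht => ?_
  obtain htε | htε := le_or_gt t ε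
  · have key : x - γ ≤ f t ↔ t ≤ D (x - γ) := by
      obtain hx₀ | hx₀ := eq_zero_or_pos (x - γ)
      · simp [hx₀, hD.map_zero, htε.trans hεA]
      · exact hf.le_iff hx₀ ht
    have hle : D x ≤ D (x - γ) := hD.antitone (sub_le_self x γ)
    simp only [_root_.addInd, mem_Ioc, ht, htε, and_self, if_true, ← Ordinal.sub_le, key,
      le_max_iff, le_min_iff, true_and]
    grind
  · simp only [_root_.addInd, mem_Ioc, ht, htε.not_ge, and_false, if_false, hf.le_iff hx ht]
    grind

/-- The functions between which ε-compressions are considered: non-increasing, left-continuous, with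
finite range and bounded support. -/
def IsStepFunction (f : ℝ → Ordinal) : Prop :=
  NonIncr f ∧ LeftCont f ∧ FiniteRange f ∧ ∃ A : ℝ, VanishesBeyond f A

theorem isStepFunction_addInd (hf : HasDistribution f D) (hD : IsDistribution A D)
    (hfin : FiniteRange f) (hεA : ε ≤ A) (γ : Ordinal) :
    IsStepFunction (addInd f γ (Ioc 0 ε)) :=
  have h := hf.addInd hD hεA γ
  ⟨h.nonIncr, h.leftCont, hfin.addInd γ _, A, (hf.vanishesBeyond hD).addInd hεA γ⟩

theorem IsCompression.exists_hasDistribution_reduceBy (hε : 0 < ε) (hεA : ε ≤ A)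
    (hf : HasDistribution f D) (hD : IsDistribution A D) (hfin : FiniteRange f)
    (hg : EqOn g (addInd f γ (Ioc 0 ε)) (Ioi 0)) (hgh : IsCompression ε h g)
    (hh : FiniteRange h) :
    ∃ δ k, ε ≤ D δ ∧ HasDistribution k (reduceBy ε δ D) ∧
      EqOn h (addInd k (γ + δ) (Ioc 0 ε)) (Ioi 0) := by
  obtain ⟨c, k, -, hc, hk, hhk, hhk'⟩ := hgh
  have hhc : EqOn h (addInd k c (Ioc 0 ε)) (Ioi 0) := fun t ht => by
    obtain htε | htε := le_or_gt t ε
    · rw [hhk t ht htε, addInd, if_pos ⟨ht, htε⟩]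
    · rw [hhk' t htε, addInd, if_neg fun h => htε.not_ge h.2]
  have hkfin : FiniteRange k := (hh.subInd c (Ioc 0 ε)).congr fun t ht => by
    rw [subInd, hhc ht, ← subInd, subInd_addInd]
  replace hk : IsRearrangement k (subInd (addInd f γ (Ioc 0 ε)) c (Ioc 0 ε)) :=
    hk.congr fun t ht => by rw [subInd, hg ht, ← subInd]
  obtain hcγ | hcγ := le_total c γ
  · obtain ⟨γ', rfl⟩ := exists_add_of_le hcγ
    rw [addInd_add, subInd_addInd] at hk
    refine ⟨0, f, hεA.trans_eq hD.map_zero.symm, (reduceBy_zero ε D).symm ▸ hf, fun t ht => ?_⟩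
    have hkf := hk.eqOn hkfin (hfin.addInd _ _) (hf.addInd hD hεA γ') ht
    rw [hhc ht, add_zero, addInd_add, addInd, hkf, ← addInd]
  · obtain ⟨δ, rfl⟩ := exists_add_of_le hcγ
    rw [subInd_addInd_add] at hk
    have hkδ : HasDistribution k (reduceBy ε δ D) :=
      hk.hasDistribution hkfin (hfin.subInd δ _) (fun _ => measurableSet_superlev_subInd hf hε δ)
        fun _ => volume_superlev_subInd hf hD.nonneg hε δ
    refine ⟨δ, k, ?_, hkδ, hhc⟩
    obtain rfl | hδ := eq_zero_or_pos δ
    · exact hεA.trans_eq hD.map_zero.symm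
    · rw [hg hε, addInd, if_pos ⟨hε, le_rfl⟩, add_le_add_iff_left] at hc
      exact (hf.le_iff hδ hε).1 hc

theorem isCompression_addInd (hε : 0 < ε) (hf : HasDistribution f D) (hD : 0 ≤ D)
    (hk : HasDistribution k (reduceBy ε δ D)) (hδ : ε ≤ D δ) (hδ₀ : 0 < δ) (γ : Ordinal) :
    IsCompression ε (addInd k (γ + δ) (Ioc 0 ε)) (addInd f γ (Ioc 0 ε)) := by
  refine ⟨γ + δ, k, hδ₀.trans_le le_add_self, ?_, ?_, fun t ht htε => ?_, fun t htε => ?_⟩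
  · rw [addInd, if_pos ⟨hε, le_rfl⟩]
    gcongr
    exact (hf.le_iff hδ₀ hε).2 hδ
  · rw [subInd_addInd_add]
    exact hk.isRearrangement (fun _ => measurableSet_superlev_subInd hf hε δ)
      fun _ => volume_superlev_subInd hf hD hε δ
  · rw [addInd, if_pos ⟨ht, htε⟩]
  · rw [addInd, if_neg fun h => htε.not_ge h.2]

theorem exists_seq_of_reflTransGen {α : Type*} {r : α → α → Prop} {a b : α}
    (hab : Relation.ReflTransGen r a b) :
    ∃ (n : ℕ) (s : ℕ → α), s 0 = a ∧ s n = b ∧ ∀ i < n, r (s i) (s (i + 1)) := by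
  induction hab using Relation.ReflTransGen.head_induction_on with
  | refl => exact ⟨0, fun _ => b, rfl, rfl, by simp⟩
  | @head a c hac _ ih =>
    obtain ⟨n, s, rfl, hb, hs⟩ := ih
    refine ⟨n + 1, fun | 0 => a | i + 1 => s i, rfl, hb, fun i hi => ?_⟩
    cases i with
    | zero => exact hac
    | succ i => exact hs i (by lia)

theorem apply_mem_areaVals (hk : IsStepFunction k) (hkg : ∀ t, 0 < t → k t ≤ g t)
    (hkh : Relation.ReflTransGen (fun u v => IsStepFunction v ∧ IsCompression ε v u) k h) :
    h ε ∈ AreaVals ε g := by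
  obtain ⟨n, s, rfl, rfl, hs⟩ := exists_seq_of_reflTransGen hkh
  refine ⟨n, s, fun i hi => ?_, hkg, fun i hi => (hs i hi).2, rfl⟩
  cases i with
  | zero => exact hk
  | succ i => exact (hs i hi).1

theorem Reduces.exists_reflTransGen_isCompression (hε : 0 < ε) (hεA : ε ≤ A)
    {D₀ : Ordinal → ℝ} (h : Reduces ε D₀ γ D) (h₀ : IsDistribution A D₀) (hfin : (range D₀).Finite)
    (hk : HasDistribution k D₀) :
    ∃ f, HasDistribution f D ∧ Relation.ReflTransGen
      (fun u v => IsStepFunction v ∧ IsCompression ε v u) k (addInd f γ (Ioc 0 ε)) := by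
  induction h with
  | nil => exact ⟨k, hk, by rw [addInd_zero]⟩
  | @step γ δ D hγ hδ ih =>
    obtain ⟨f, hf, hkf⟩ := ih
    obtain rfl | hδ₀ := eq_zero_or_pos δ
    · rw [reduceBy_zero, add_zero]
      exact ⟨f, hf, hkf⟩
    have hD := hγ.isDistribution hε.le h₀
    have hD' := hD.reduceBy hε.le hδ
    obtain ⟨f', hf'⟩ := hD'.exists_hasDistribution
    have hf'fin := hf'.finiteRange ((hγ.step hδ).finite_range hfin)
    exact ⟨f', hf', hkf.tail ⟨isStepFunction_addInd hf' hD' hf'fin hεA _,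
      isCompression_addInd hε hf hD.nonneg hf' hδ hδ₀ γ⟩⟩

theorem areaVals_subset_reductionTotals (hε : 0 < ε) (hεA : ε ≤ A) (hvan : VanishesBeyond g A) :
    AreaVals ε g ⊆ reductionTotals ε (distribution A g) := by
  have hA : 0 ≤ A := hε.le.trans hεA
  rintro _ ⟨n, s, hs, hsg, hcomp, rfl⟩
  obtain ⟨h₁, h₂, hfin, -⟩ := hs 0 n.zero_le
  have hsvan : VanishesBeyond (s 0) A := fun t ht =>
    le_antisymm ((hsg t (hA.trans_lt ht)).trans_eq (hvan t ht)) zero_le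
  have h₀ := hasDistribution_distribution hA h₁ h₂ hsvan
  have hD₀ := isDistribution_distribution hA (s 0)
  have hD₀fin := h₀.finite_range_of_finiteRange hD₀.nonneg hfin
  have key (i : ℕ) (hi : i ≤ n) : ∃ γ D f, Reduces ε (distribution A (s 0)) γ D ∧
      HasDistribution f D ∧ EqOn (s i) (addInd f γ (Ioc 0 ε)) (Ioi 0) := by
    induction i with
    | zero => exact ⟨0, _, s 0, .nil, h₀, by rw [addInd_zero]; exact fun _ _ => rfl⟩
    | succ i ih =>
      obtain ⟨γ, D, f, hD, hf, hsf⟩ := ih (Nat.le_of_succ_le hi)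
      have hffin := hf.finiteRange (hD.finite_range hD₀fin)
      obtain ⟨δ, k, hδ, hk, hsk⟩ := (hcomp i hi).exists_hasDistribution_reduceBy hε hεA hf
        (hD.isDistribution hε.le hD₀) hffin hsf (hs (i + 1) hi).2.2.1
      exact ⟨γ + δ, _, k, hD.step hδ, hk, hsk⟩
  obtain ⟨γ, D, f, hD, hf, hsf⟩ := key n le_rfl
  obtain ⟨E, hE, hDE⟩ := hD.exists_of_le (distribution_mono hA hsg)
  rw [hsf hε, addInd, if_pos ⟨hε, le_rfl⟩]
  refine ⟨_, hE.step (le_trans ?_ (hDE _))⟩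
  obtain hfε | hfε := eq_zero_or_pos (f ε)
  · rw [hfε, (hD.isDistribution hε.le hD₀).map_zero]
    exact hεA
  · exact (hf.le_iff hfε hε).1 le_rfl

theorem bddAbove_areaVals (hε : 0 < ε) (hεA : ε ≤ A) (hvan : VanishesBeyond g A) :
    BddAbove (AreaVals ε g) := by
  obtain ⟨B, hB⟩ := exists_forall_reductionTotals_lt_opow hε
    (isDistribution_distribution (hε.le.trans hεA) g)
  exact ⟨ω ^ B, fun γ hγ => (hB γ (areaVals_subset_reductionTotals hε hεA hvan hγ)).le⟩

theorem carea_mem_reductionTotals (hε : 0 < ε) (hεA : ε ≤ A) (hvan : VanishesBeyond g A) :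
    Carea ε g ∈ reductionTotals ε (distribution A g) :=
  mem_reductionTotals_of_isLUB hε.le (isDistribution_distribution (hε.le.trans hεA) g)
    (areaVals_subset_reductionTotals hε hεA hvan)
    (isLUB_csSup' (bddAbove_areaVals hε hεA hvan))

theorem exists_isStepFunction_le (h₁ : NonIncr g) (h₂ : LeftCont g) (hvan : VanishesBeyond g A)
    (F : Finset Ordinal) :
    ∃ k, IsStepFunction k ∧ (∀ t, k t ≤ g t) ∧ ∀ t, ∀ x ∈ F, x ≤ g t → x ≤ k t := by
  let k (t : ℝ) : Ordinal := (F.filter (· ≤ g t)).sup id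
  have hkg (t : ℝ) : k t ≤ g t := Finset.sup_le fun x hx => (Finset.mem_filter.1 hx).2
  refine ⟨k, ⟨fun s t hs hst => ?_, fun t ht => ?_, ?_, A, fun t ht => ?_⟩, hkg,
    fun t x hx hxg => ?_⟩
  · exact Finset.sup_mono (Finset.monotone_filter_right F fun x _ hx => hx.trans (h₁ s t hs hst))
  · obtain ⟨η, hη, hconst⟩ := h₂ t ht
    exact ⟨η, hη, fun s hs hst => by simp only [k, hconst s hs hst]⟩
  · refine ((F.powerset.finite_toSet).image (·.sup id)).subset ?_
    rintro _ ⟨t, -, rfl⟩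
    exact ⟨_, Finset.mem_coe.2 (Finset.mem_powerset.2 (Finset.filter_subset _ F)), rfl⟩
  · exact le_antisymm ((hkg t).trans_eq (hvan t ht)) zero_le
  · exact Finset.le_sup (f := id) (Finset.mem_filter.2 ⟨hx, hxg⟩)

theorem le_carea_of_mem_reductionTotals (hε : 0 < ε) (hεA : ε ≤ A) (h₁ : NonIncr g)
    (h₂ : LeftCont g) (hvan : VanishesBeyond g A)
    (hγ : γ ∈ reductionTotals ε (distribution A g)) : γ ≤ Carea ε g := by
  have hA : 0 ≤ A := hε.le.trans hεA
  obtain ⟨D, hD⟩ := hγ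
  obtain ⟨F, hF⟩ := hD.exists_finset ∅
  obtain ⟨k, hk, hkg, hgk⟩ := exists_isStepFunction_le h₁ h₂ hvan F
  obtain ⟨E, hE, -⟩ := hF (distribution A k) fun x hx =>
    (distribution_mono hA (fun t _ => hkg t) x).antisymm
      (distribution_le_distribution hA fun t _ => hgk t x hx)
  have hkvan : VanishesBeyond k A := fun t ht => le_antisymm ((hkg t).trans_eq (hvan t ht)) zero_le
  have hkD := hasDistribution_distribution hA hk.1 hk.2.1 hkvan
  have hD₀ := isDistribution_distribution hA k
  obtain ⟨f, -, hf⟩ := hE.exists_reflTransGen_isCompression hε hεA hD₀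
    (hkD.finite_range_of_finiteRange hD₀.nonneg hk.2.2.1) hkD
  have hmem := apply_mem_areaVals hk (fun t _ => hkg t) hf
  rw [addInd, if_pos ⟨hε, le_rfl⟩] at hmem
  exact le_self_add.trans (le_csSup (bddAbove_areaVals hε hεA hvan) hmem)

theorem eq_of_mem_Ioo_distribution (hA : 0 ≤ A) (hh : HasDistribution h (distribution A h))
    (hle : ∀ t, 0 < t → g t ≤ h t) {α : Ordinal} {t : ℝ} (ht₀ : 0 < t)
    (ht : t ∈ Ioo (distribution A h (α + 1)) (distribution A g α)) : g t = α ∧ h t = α := by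
  have hαg : α ≤ g t := le_of_lt_distribution hA ht₀ ht.2
  have hhα : h t ≤ α := by
    have hpos : 0 < α + 1 := Order.bot_lt_succ α
    rw [← Order.lt_add_one_iff, ← not_le, hh.le_iff hpos ht₀]
    exact ht.1.not_ge
  exact ⟨((hle t ht₀).trans hhα).antisymm hαg, hhα.antisymm (hαg.trans (hle t ht₀))⟩

theorem hasGap_distribution (hε : 0 ≤ ε) (hA : 0 ≤ A) (h₁ : NonIncr h) (h₂ : LeftCont h)
    (hvan : VanishesBeyond h A) (hle : ∀ t, 0 < t → g t ≤ h t)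
    (hmeas : ENNReal.ofReal ε ≤ volume {t : ℝ | 0 < t ∧ g t + 1 ≤ h t}) :
    HasGap ε A (distribution A g) (distribution A h) := by
  intro F
  have hh := hasDistribution_distribution hA h₁ h₂ hvan
  set S := {t : ℝ | 0 < t ∧ g t + 1 ≤ h t}
  let I (α : Ordinal) := Ioo (distribution A h (α + 1)) (distribution A g α)
  have hIA (α : Ordinal) : I α ⊆ Ioc 0 A := fun t ht =>
    ⟨((isDistribution_distribution hA h).nonneg _).trans_lt ht.1,
      (ht.2.trans_le (distribution_le hA g α)).le⟩
  have hI {α : Ordinal} {t : ℝ} (ht : t ∈ I α) : g t = α ∧ h t = α :=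
    eq_of_mem_Ioo_distribution hA hh hle (hIA α ht).1 ht
  have hSI : Disjoint S (⋃ α ∈ F, I α) := by
    refine disjoint_left.2 fun t htS ht => ?_
    obtain ⟨α, -, htα⟩ := mem_iUnion₂.1 ht
    obtain ⟨hg, hh⟩ := hI htα
    exact (Order.add_one_le_iff.1 (hg ▸ hh ▸ htS.2)).false
  have hsub : S ∪ ⋃ α ∈ F, I α ⊆ Ioc 0 A := by
    refine union_subset (fun t ht => ⟨ht.1, not_lt.1 fun htA => ?_⟩)
      (iUnion₂_subset fun α _ => hIA α)
    exact (Order.add_one_le_iff.1 ht.2).not_ge ((hvan t htA).trans_le zero_le)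
  have hvol : volume (⋃ α ∈ F, I α) =
      ENNReal.ofReal (∑ α ∈ F, max 0 (distribution A g α - distribution A h (α + 1))) := by
    rw [measure_biUnion_finset, ENNReal.ofReal_sum_of_nonneg fun _ _ => le_max_left _ _]
    · simp [I, Real.volume_Ioo, ENNReal.ofReal_max]
    · exact fun α _ β _ hne => disjoint_left.2 fun t hα hβ =>
        hne ((hI hα).1.symm.trans (hI hβ).1)
    · exact fun α _ => measurableSet_Ioo
  have hsum : 0 ≤ ∑ α ∈ F, max 0 (distribution A g α - distribution A h (α + 1)) :=
    Finset.sum_nonneg fun _ _ => le_max_left _ _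
  rw [le_sub_iff_add_le', ← ENNReal.ofReal_le_ofReal_iff hA, ENNReal.ofReal_add hε hsum]
  calc _ ≤ volume S + volume (⋃ α ∈ F, I α) := by rw [hvol]; gcongr
    _ = volume (S ∪ ⋃ α ∈ F, I α) :=
      (measure_union hSI (F.measurableSet_biUnion fun _ _ => measurableSet_Ioo)).symm
    _ ≤ volume (Ioc 0 A) := measure_mono hsub
    _ = ENNReal.ofReal A := by rw [Real.volume_Ioc, _root_.sub_zero]

end DistributionFunction

theorem stmt_4_general (ε A : ℝ) (hε : 0 < ε) (g h : ℝ → Ordinal) (hhNI : NonIncr h)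
    (hhLC : LeftCont h) (hvan : VanishesBeyond h A) (hle : ∀ t : ℝ, 0 < t → g t ≤ h t)
    (hmeas : ENNReal.ofReal ε ≤ volume {t : ℝ | 0 < t ∧ g t + 1 ≤ h t}) :
    Carea ε g + 1 ≤ Carea ε h := by
  set B := max A ε
  have hεB : ε ≤ B := le_max_right A ε
  have hB : 0 ≤ B := hε.le.trans hεB
  have hvanh : VanishesBeyond h B := fun t ht => hvan t ((le_max_left A ε).trans_lt ht)
  have hvang : VanishesBeyond g B := fun t ht =>
    le_antisymm ((hle t (hB.trans_lt ht)).trans_eq (hvanh t ht)) zero_le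
  have hgap : HasGap ε B (distribution B g) (distribution B h) :=
    hasGap_distribution hε.le hB hhNI hhLC hvanh hle hmeas
  exact le_carea_of_mem_reductionTotals hε hεB hhNI hhLC hvanh <|
    add_one_mem_reductionTotals hε.le (isDistribution_distribution hB g) (distribution_mono hB hle)
      hgap (carea_mem_reductionTotals hε hεB hvang)

/-- comparison of ε-areas for general non-increasing functions. -/
theorem stmt_4 (ε A : ℝ) (hε : 0 < ε) (g h : ℝ → Ordinal)
    (hgNI : NonIncr g) (hgLC : LeftCont g) (hgCV : CountableValued g)
    (hhNI : NonIncr h) (hhLC : LeftCont h) (hhCV : CountableValued h)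
    (hvan : ∀ t : ℝ, A < t → g t = 0 ∧ h t = 0)
    (hle : ∀ t : ℝ, 0 < t → g t ≤ h t)
    (hmeas : ENNReal.ofReal ε ≤ volume {t : ℝ | 0 < t ∧ g t + 1 ≤ h t}) :
    Carea ε g + 1 ≤ Carea ε h :=
  stmt_4_general ε A hε g h hhNI hhLC (fun t ht => (hvan t ht).2) hle hmeas
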